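/- arXiv:1307.7024 — 2 statements merged into one kernel-verified Lean document; each statement's English description precedes it below -/
import Mathlib

section
/- Closed form for the supremum over the coupled multi-view constraint set: let M₁, M₂ be symmetric positive definite n×n real matrices, let K₁ₗ, K₂ₗ be l×n real matrices, let K₁ᵤ, K₂ᵤ be u×n real matrices, let γ₃ ≥ 0, and let σ ∈ ℝˡ. Define S = K₁ₗ M₁⁻¹ K₁ₗᵀ + K₂ₗ M₂⁻¹ K₂ₗᵀ, Θ = K₁ᵤ M₁⁻¹ K₁ᵤᵀ + K₂ᵤ M₂⁻¹ K₂ᵤᵀ, and J = K₁ᵤ M₁⁻¹ K₁ₗᵀ − K₂ᵤ M₂⁻¹ K₂ₗᵀ. Then sup{ σᵀ(K₁ₗα₁ + K₂ₗα₂) : (α₁, α₂) ∈ ℝⁿ × ℝⁿ, α₁ᵀM₁α₁ + α₂ᵀM₂α₂ + γ₃ ‖K₁ᵤα₁ − K₂ᵤα₂‖² ≤ 1 } = √( σᵀ S σ − γ₃ σᵀ Jᵀ (I + γ₃ Θ)⁻¹ J σ ), where I is the u×u identity matrix and ‖·‖ is the Euclidean norm on ℝᵘ. -/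
/-!
The constraint is `q p ≤ 1` for a positive semidefinite quadratic form `q` on pairs `p = (α₁, α₂)`,
and the objective is a linear functional `f`. If a vector `a` represents `f` with respect to the
polar form of `q`, then Cauchy–Schwarz gives `f p ^ 2 ≤ f a * q p`, and the bound `√(f a)` is
attained at a multiple of `a` (`sSup_image_of_represents`).

The representing vector solves the normal equations
`M₁ a₁ + γ₃ K₁ᵤᵀ w = K₁ₗᵀ σ`, `M₂ a₂ - γ₃ K₂ᵤᵀ w = K₂ₗᵀ σ`, with `w = K₁ᵤ a₁ - K₂ᵤ a₂`. Solving the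
first two for `a₁, a₂` and substituting in the third gives `(1 + γ₃ Θ) w = J σ`, so the solution is
explicit, and `f a` is the expression under the root.
-/

open Matrix BigOperators

/-- Maximum of a functional `f` over the unit ball `q ≤ 1` of a nonnegative quadratic form. The
hypothesis `hqa` encodes both that `q` is quadratic along lines of direction `a` and that `a`
represents `f` for the polar form of `q`, with `q a = f a`. -/
lemma sSup_image_of_represents {E : Type*} [AddCommGroup E] [Module ℝ E] (q f : E → ℝ) (a : E)
    (hq : ∀ x, 0 ≤ q x) (hq0 : q 0 = 0) (hf : ∀ t : ℝ, f (t • a) = t * f a)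
    (hqa : ∀ (x : E) (t : ℝ), q (x + t • a) = q x + 2 * t * f x + t ^ 2 * f a) :
    sSup (f '' {x | q x ≤ 1}) = Real.sqrt (f a) := by
  have hf0 : f 0 = 0 := by simpa using hf 0
  have hqt : ∀ t : ℝ, q (t • a) = t ^ 2 * f a := fun t => by
    simpa [hq0, hf0] using hqa 0 t
  have hfa : 0 ≤ f a := by simpa using (hq _).trans_eq (hqt 1)
  -- Cauchy–Schwarz: `t ↦ q (x + t • a)` is a nonnegative quadratic polynomial.
  have hcs : ∀ x, f x ^ 2 ≤ f a * q x := fun x => by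
    have h : discrim (f a) (2 * f x) (q x) ≤ 0 := discrim_le_zero fun t => by
      have h1 := hq (x + t • a)
      rw [hqa] at h1
      linarith
    unfold discrim at h
    linarith
  refine IsGreatest.csSup_eq ⟨⟨(Real.sqrt (f a))⁻¹ • a, ?_, ?_⟩, ?_⟩
  · -- When `f a = 0` the junk value `0⁻¹ = 0` makes the maximizer the zero vector.
    rw [Set.mem_ofPred_eq, hqt, inv_pow, Real.sq_sqrt hfa]
    exact inv_mul_le_one
  · rw [hf]
    rcases hfa.eq_or_lt with h | h
    · simp [← h]
    · have h2 := Real.sqrt_pos.2 h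
      field_simp
      exact (Real.sq_sqrt hfa).symm
  · rintro _ ⟨x, hx, rfl⟩
    exact Real.le_sqrt_of_sq_le ((hcs x).trans (mul_le_of_le_one_right hfa hx))

lemma dotProduct_mulVec_comm_of_symm {m : Type*} [Fintype m] {M : Matrix m m ℝ} (hM : Mᵀ = M)
    (x y : m → ℝ) : x ⬝ᵥ (M *ᵥ y) = y ⬝ᵥ (M *ᵥ x) := by
  rw [dotProduct_mulVec, ← mulVec_transpose, hM, dotProduct_comm]

lemma posSemidef_mul_inv_mul_transpose {m k : Type*} [Fintype m] [Fintype k] [DecidableEq m]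
    {M : Matrix m m ℝ} (hM : M.PosDef) (K : Matrix k m ℝ) : (K * M⁻¹ * Kᵀ).PosSemidef := by
  simpa using hM.inv.posSemidef.mul_mul_conjTranspose_same K

theorem sup_over_coupled_multiview_constraint (n l u : ℕ)
    (M₁ M₂ : Matrix (Fin n) (Fin n) ℝ) (hM₁ : M₁.PosDef) (hM₂ : M₂.PosDef)
    (K₁ₗ K₂ₗ : Matrix (Fin l) (Fin n) ℝ) (K₁ᵤ K₂ᵤ : Matrix (Fin u) (Fin n) ℝ)
    (γ₃ : ℝ) (hγ₃ : 0 ≤ γ₃) (σ : Fin l → ℝ)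
    (S : Matrix (Fin l) (Fin l) ℝ)
    (hS : S = K₁ₗ * M₁⁻¹ * K₁ₗᵀ + K₂ₗ * M₂⁻¹ * K₂ₗᵀ)
    (Θ : Matrix (Fin u) (Fin u) ℝ)
    (hΘ : Θ = K₁ᵤ * M₁⁻¹ * K₁ᵤᵀ + K₂ᵤ * M₂⁻¹ * K₂ᵤᵀ)
    (J : Matrix (Fin u) (Fin l) ℝ)
    (hJ : J = K₁ᵤ * M₁⁻¹ * K₁ₗᵀ - K₂ᵤ * M₂⁻¹ * K₂ₗᵀ) :
    sSup ((fun p : (Fin n → ℝ) × (Fin n → ℝ) => σ ⬝ᵥ (K₁ₗ *ᵥ p.1 + K₂ₗ *ᵥ p.2)) ''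
        {p : (Fin n → ℝ) × (Fin n → ℝ) |
          p.1 ⬝ᵥ (M₁ *ᵥ p.1) + p.2 ⬝ᵥ (M₂ *ᵥ p.2) +
            γ₃ * ∑ i, ((K₁ᵤ *ᵥ p.1) i - (K₂ᵤ *ᵥ p.2) i) ^ 2 ≤ 1})
      = Real.sqrt (σ ⬝ᵥ (S *ᵥ σ) -
          γ₃ * (σ ⬝ᵥ ((Jᵀ * (1 + γ₃ • Θ)⁻¹ * J) *ᵥ σ))) := by
  have hs₁ : M₁ᵀ = M₁ := by simpa using hM₁.isHermitian.eq
  have hs₂ : M₂ᵀ = M₂ := by simpa using hM₂.isHermitian.eq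
  have hi₁ : M₁⁻¹ᵀ = M₁⁻¹ := by rw [transpose_nonsing_inv, hs₁]
  have hi₂ : M₂⁻¹ᵀ = M₂⁻¹ := by rw [transpose_nonsing_inv, hs₂]
  have hc₁ : ∀ v, M₁ *ᵥ (M₁⁻¹ *ᵥ v) = v := fun v => by
    rw [mulVec_mulVec, mul_nonsing_inv _ ((isUnit_iff_isUnit_det _).1 hM₁.isUnit), one_mulVec]
  have hc₂ : ∀ v, M₂ *ᵥ (M₂⁻¹ *ᵥ v) = v := fun v => by
    rw [mulVec_mulVec, mul_nonsing_inv _ ((isUnit_iff_isUnit_det _).1 hM₂.isUnit), one_mulVec]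
  have hΘp : Θ.PosSemidef := hΘ ▸
    (posSemidef_mul_inv_mul_transpose hM₁ K₁ᵤ).add (posSemidef_mul_inv_mul_transpose hM₂ K₂ᵤ)
  have hT : (1 + γ₃ • Θ).PosDef := PosDef.one.add_posSemidef (hΘp.smul hγ₃)
  obtain ⟨w, hw⟩ : ∃ w, w = (1 + γ₃ • Θ)⁻¹ *ᵥ (J *ᵥ σ) := ⟨_, rfl⟩
  have hTw : w + γ₃ • (Θ *ᵥ w) = J *ᵥ σ := by
    have h : (1 + γ₃ • Θ) *ᵥ w = J *ᵥ σ := by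
      rw [hw, mulVec_mulVec, mul_nonsing_inv _ ((isUnit_iff_isUnit_det _).1 hT.isUnit), one_mulVec]
    rwa [add_mulVec, one_mulVec, smul_mulVec] at h
  obtain ⟨a₁, ha₁⟩ : ∃ a, a = M₁⁻¹ *ᵥ (K₁ₗᵀ *ᵥ σ - γ₃ • (K₁ᵤᵀ *ᵥ w)) := ⟨_, rfl⟩
  obtain ⟨a₂, ha₂⟩ : ∃ a, a = M₂⁻¹ *ᵥ (K₂ₗᵀ *ᵥ σ + γ₃ • (K₂ᵤᵀ *ᵥ w)) := ⟨_, rfl⟩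
  have hMa₁ : M₁ *ᵥ a₁ = K₁ₗᵀ *ᵥ σ - γ₃ • (K₁ᵤᵀ *ᵥ w) := by rw [ha₁, hc₁]
  have hMa₂ : M₂ *ᵥ a₂ = K₂ₗᵀ *ᵥ σ + γ₃ • (K₂ᵤᵀ *ᵥ w) := by rw [ha₂, hc₂]
  have hd : K₁ᵤ *ᵥ a₁ - K₂ᵤ *ᵥ a₂ = w := by
    rw [eq_sub_of_add_eq hTw, ha₁, ha₂, hJ, hΘ]
    simp only [sub_mulVec, add_mulVec, mulVec_add, mulVec_sub, mulVec_smul, ← mulVec_mulVec,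
      smul_add]
    abel
  have hval : σ ⬝ᵥ (S *ᵥ σ) - γ₃ * (σ ⬝ᵥ ((Jᵀ * (1 + γ₃ • Θ)⁻¹ * J) *ᵥ σ)) =
      σ ⬝ᵥ (K₁ₗ *ᵥ a₁ + K₂ₗ *ᵥ a₂) := by
    have hJt : Jᵀ = K₁ₗ * M₁⁻¹ * K₁ᵤᵀ - K₂ₗ * M₂⁻¹ * K₂ᵤᵀ := by
      simp only [hJ, transpose_sub, transpose_mul, transpose_transpose, hi₁, hi₂, Matrix.mul_assoc]
    rw [← mulVec_mulVec, ← mulVec_mulVec, ← hw, hJt, hS, ha₁, ha₂]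
    simp only [sub_mulVec, add_mulVec, mulVec_add, mulVec_sub, mulVec_smul, ← mulVec_mulVec,
      dotProduct_add, dotProduct_sub, dotProduct_smul, smul_eq_mul]
    ring
  -- The pair `(a₁, a₂)` represents the objective with respect to the polar form.
  have hrep : ∀ x₁ x₂, x₁ ⬝ᵥ (M₁ *ᵥ a₁) + x₂ ⬝ᵥ (M₂ *ᵥ a₂) +
      γ₃ * ((K₁ᵤ *ᵥ x₁ - K₂ᵤ *ᵥ x₂) ⬝ᵥ w) = σ ⬝ᵥ (K₁ₗ *ᵥ x₁ + K₂ₗ *ᵥ x₂) := fun x₁ x₂ => by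
    have ht : ∀ {k : ℕ} (K : Matrix (Fin k) (Fin n) ℝ) (x : Fin n → ℝ) (v : Fin k → ℝ),
        x ⬝ᵥ (Kᵀ *ᵥ v) = v ⬝ᵥ (K *ᵥ x) := fun K x v => by
      rw [mulVec_transpose, dotProduct_comm, dotProduct_mulVec]
    rw [hMa₁, hMa₂]
    simp only [dotProduct_add, dotProduct_sub, dotProduct_smul, smul_eq_mul, ht, sub_dotProduct]
    rw [dotProduct_comm w, dotProduct_comm w]
    ring
  have hsum : ∀ x₁ x₂ : Fin n → ℝ, ∑ i, ((K₁ᵤ *ᵥ x₁) i - (K₂ᵤ *ᵥ x₂) i) ^ 2 =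
      (K₁ᵤ *ᵥ x₁ - K₂ᵤ *ᵥ x₂) ⬝ᵥ (K₁ᵤ *ᵥ x₁ - K₂ᵤ *ᵥ x₂) := fun x₁ x₂ => by
    simp [dotProduct, pow_two]
  rw [hval]
  refine sSup_image_of_represents
    (fun p : (Fin n → ℝ) × (Fin n → ℝ) => p.1 ⬝ᵥ (M₁ *ᵥ p.1) + p.2 ⬝ᵥ (M₂ *ᵥ p.2) +
      γ₃ * ∑ i, ((K₁ᵤ *ᵥ p.1) i - (K₂ᵤ *ᵥ p.2) i) ^ 2)
    (fun p => σ ⬝ᵥ (K₁ₗ *ᵥ p.1 + K₂ₗ *ᵥ p.2)) (a₁, a₂) ?_ ?_ ?_ ?_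
  · intro p
    have h₁ : 0 ≤ p.1 ⬝ᵥ (M₁ *ᵥ p.1) := by
      simpa using hM₁.posSemidef.dotProduct_mulVec_nonneg p.1
    have h₂ : 0 ≤ p.2 ⬝ᵥ (M₂ *ᵥ p.2) := by
      simpa using hM₂.posSemidef.dotProduct_mulVec_nonneg p.2
    positivity
  · simp
  · intro t
    simp only [Prod.smul_mk, mulVec_smul, ← smul_add, dotProduct_smul, smul_eq_mul]
  · rintro ⟨x₁, x₂⟩ t
    have hdd : K₁ᵤ *ᵥ (x₁ + t • a₁) - K₂ᵤ *ᵥ (x₂ + t • a₂) =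
        (K₁ᵤ *ᵥ x₁ - K₂ᵤ *ᵥ x₂) + t • w := by
      rw [← hd]
      simp only [mulVec_add, mulVec_smul, smul_sub]
      abel
    simp only [hsum, Prod.smul_mk, Prod.mk_add_mk, hdd]
    rw [← hrep x₁ x₂, ← hrep a₁ a₂, hd]
    simp only [mulVec_add, mulVec_smul, add_dotProduct, dotProduct_add, smul_dotProduct,
      dotProduct_smul, smul_eq_mul]
    rw [dotProduct_mulVec_comm_of_symm hs₁ a₁ x₁, dotProduct_mulVec_comm_of_symm hs₂ a₂ x₂,
      dotProduct_comm w (K₁ᵤ *ᵥ x₁ - K₂ᵤ *ᵥ x₂)]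
    ring
end

section
/- Theorem 4 (empirical Rademacher complexity of the MvLapSVM function class, coefficient form). Let n = l + u, let M₁, M₂ be symmetric positive definite n×n real matrices, let K₁ₗ, K₂ₗ be l×n real matrices, let K₁ᵤ, K₂ᵤ be u×n real matrices, and let γ₃ ≥ 0. Define S = K₁ₗ M₁⁻¹ K₁ₗᵀ + K₂ₗ M₂⁻¹ K₂ₗᵀ, Θ = K₁ᵤ M₁⁻¹ K₁ᵤᵀ + K₂ᵤ M₂⁻¹ K₂ᵤᵀ, J = K₁ᵤ M₁⁻¹ K₁ₗᵀ − K₂ᵤ M₂⁻¹ K₂ₗᵀ, and U² = tr(S) − γ₃ tr( Jᵀ (I + γ₃Θ)⁻¹ J ). Let R̂ = (1/l) E_σ[ sup{ |σᵀ(K₁ₗα₁ + K₂ₗα₂)| : (α₁, α₂) ∈ ℝⁿ × ℝⁿ, α₁ᵀM₁α₁ + α₂ᵀM₂α₂ + γ₃‖K₁ᵤα₁ − K₂ᵤα₂‖² ≤ 1 } ], where σ is uniformly distributed on {+1, −1}ˡ. Then U/(√2·l) ≤ R̂ ≤ U/l. -/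
/-! The supremum defining the complexity is explicit. Writing `N` for the positive definite matrix
of the constraint on `(α₁, α₂)`, Cauchy–Schwarz gives
`sup {|σᵀ K p| : pᵀ N p ≤ 1} = √(σᵀ A σ)` with `A = K N⁻¹ Kᵀ` (`sSup_abs_dotProduct_eq_sqrt`),
and the Woodbury identity identifies `tr A` with `U²`. Since `E[σᵀ A σ] = tr A`, what is left is to
compare `E f` and `E f²` for `f σ = √(σᵀ A σ)` (`khintchine_quadratic`).

The upper bound is Jensen's inequality. The lower bound, the Khintchine–Kahane inequality with
the sharp constant `√2`, follows the argument of Latała and Oleszkiewicz. As `f` is even, it has no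
Fourier weight on level one of the cube, so the Poincaré inequality improves by a factor of two,
`2 Var f ≤ ℰ(f)` (`two_mul_variance_le`). On the other hand the `l` neighbours of `σ` add
up to `(l - 2) σ`, so Cauchy–Schwarz for the form `A` gives `∑ᵢ f(σ) f(σⁱ) ≥ (l - 2) f(σ)²`,
that is `ℰ(f) ≤ E f²`. Together `E f² ≤ 2 (E f)²`. -/

open Matrix BigOperators

/-! ### The discrete cube -/

/-- Expectation of `f` under the uniform distribution on the cube `{true, false}ⁿ`. -/
noncomputable def cubeMean {n : ℕ} (f : (Fin n → Bool) → ℝ) : ℝ := (∑ σ, f σ) / 2 ^ n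

/-- The vector of signs encoded by `σ`, with `true` standing for `1` and `false` for `-1`. -/
def signVec {n : ℕ} (σ : Fin n → Bool) : Fin n → ℝ := fun i => if σ i then (1 : ℝ) else -1

/-- The neighbour of `σ` in direction `i`. -/
def flipAt {n : ℕ} (i : Fin n) (σ : Fin n → Bool) : Fin n → Bool :=
  Function.update σ i (!σ i)

/-- The Dirichlet form of the cube, `¼ E ∑ᵢ (f(σ) - f(σⁱ))²`. -/
noncomputable def cubeEnergy {n : ℕ} (f : (Fin n → Bool) → ℝ) : ℝ :=
  (∑ i, cubeMean fun σ => (f σ - f (flipAt i σ)) ^ 2) / 4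

/-- The Fourier weight of `f` on level one. -/
noncomputable def levelOne {n : ℕ} (f : (Fin n → Bool) → ℝ) : ℝ :=
  ∑ i, (cubeMean fun σ => signVec σ i * f σ) ^ 2

section cube

variable {n : ℕ}

lemma cubeMean_add (f g : (Fin n → Bool) → ℝ) :
    cubeMean (fun σ => f σ + g σ) = cubeMean f + cubeMean g := by
  simp only [cubeMean, Finset.sum_add_distrib, add_div]

lemma cubeMean_sub (f g : (Fin n → Bool) → ℝ) :
    cubeMean (fun σ => f σ - g σ) = cubeMean f - cubeMean g := by
  simp only [cubeMean, Finset.sum_sub_distrib, sub_div]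

lemma cubeMean_const_mul (c : ℝ) (f : (Fin n → Bool) → ℝ) :
    cubeMean (fun σ => c * f σ) = c * cubeMean f := by
  simp only [cubeMean, ← Finset.mul_sum, mul_div_assoc]

lemma cubeMean_sum {ι : Type*} (s : Finset ι) (f : ι → (Fin n → Bool) → ℝ) :
    cubeMean (fun σ => ∑ i ∈ s, f i σ) = ∑ i ∈ s, cubeMean (f i) := by
  simp only [cubeMean]
  rw [Finset.sum_comm, Finset.sum_div]

lemma cubeMean_const (c : ℝ) : cubeMean (fun _ : Fin n → Bool => c) = c := by
  simp [cubeMean]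

lemma cubeMean_mono {f g : (Fin n → Bool) → ℝ} (h : ∀ σ, f σ ≤ g σ) :
    cubeMean f ≤ cubeMean g := by
  unfold cubeMean
  gcongr with σ
  exact h σ

lemma cubeMean_nonneg {f : (Fin n → Bool) → ℝ} (h : ∀ σ, 0 ≤ f σ) : 0 ≤ cubeMean f :=
  div_nonneg (Finset.sum_nonneg fun σ _ => h σ) (by positivity)

lemma cubeMean_succ (f : (Fin (n + 1) → Bool) → ℝ) :
    cubeMean f = ((cubeMean fun τ => f (Fin.cons true τ)) +
      cubeMean fun τ => f (Fin.cons false τ)) / 2 := by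
  simp only [cubeMean]
  rw [← (Fin.consEquiv fun _ => Bool).sum_comp, Fintype.sum_prod_type]
  simp only [Fintype.sum_bool]
  change ((∑ τ, f (Fin.cons true τ)) + ∑ τ, f (Fin.cons false τ)) / 2 ^ (n + 1) = _
  rw [pow_succ]
  field_simp

lemma flipAt_flipAt (i : Fin n) (σ : Fin n → Bool) : flipAt i (flipAt i σ) = σ := by
  simp [flipAt]

lemma cubeMean_flipAt (i : Fin n) (f : (Fin n → Bool) → ℝ) :
    cubeMean (fun σ => f (flipAt i σ)) = cubeMean f := by
  unfold cubeMean
  congr 1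
  exact Equiv.sum_comp (Function.Involutive.toPerm (flipAt i) (flipAt_flipAt i)) f

lemma cubeMean_compl (f : (Fin n → Bool) → ℝ) :
    cubeMean (fun σ => f (fun i => !σ i)) = cubeMean f := by
  unfold cubeMean
  congr 1
  exact Equiv.sum_comp (Function.Involutive.toPerm (fun (σ : Fin n → Bool) i => !σ i)
    (fun σ => by simp)) f

lemma flipAt_zero_cons (b : Bool) (τ : Fin n → Bool) :
    flipAt 0 (Fin.cons b τ : Fin (n + 1) → Bool) = Fin.cons (!b) τ := by
  simp [flipAt]

lemma flipAt_succ_cons (i : Fin n) (b : Bool) (τ : Fin n → Bool) :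
    flipAt i.succ (Fin.cons b τ : Fin (n + 1) → Bool) = Fin.cons b (flipAt i τ) := by
  simp [flipAt, Fin.cons_update]

lemma signVec_zero_cons (b : Bool) (τ : Fin n → Bool) :
    signVec (Fin.cons b τ : Fin (n + 1) → Bool) 0 = if b then 1 else -1 := by
  simp [signVec]

lemma signVec_succ_cons (i : Fin n) (b : Bool) (τ : Fin n → Bool) :
    signVec (Fin.cons b τ : Fin (n + 1) → Bool) i.succ = signVec τ i := by
  simp [signVec]

lemma signVec_mul_self (σ : Fin n → Bool) (i : Fin n) : signVec σ i * signVec σ i = 1 := by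
  unfold signVec; split_ifs <;> norm_num

lemma signVec_flipAt (i j : Fin n) (σ : Fin n → Bool) :
    signVec (flipAt i σ) j = if j = i then -signVec σ j else signVec σ j := by
  by_cases h : j = i
  · subst h
    cases hs : σ j <;> simp [signVec, flipAt, hs]
  · simp [signVec, flipAt, h]

lemma signVec_compl (σ : Fin n → Bool) : signVec (fun i => !σ i) = -signVec σ := by
  ext i
  cases hs : σ i <;> simp [signVec, hs]

lemma cubeMean_signVec_mul (i j : Fin n) :
    cubeMean (fun σ => signVec σ i * signVec σ j) = if i = j then 1 else 0 := by
  by_cases h : i = j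
  · subst h
    simp [signVec_mul_self, cubeMean_const]
  · have h1 := cubeMean_flipAt i (fun σ => signVec σ i * signVec σ j)
    simp only [signVec_flipAt, if_true, if_neg (Ne.symm h)] at h1
    have h2 := cubeMean_const_mul (-1) (fun σ => signVec σ i * signVec σ j)
    simp only [neg_mul, one_mul] at h1 h2
    rw [if_neg h]
    linarith

/-! A function on the `(n+1)`-cube is written `g τ + σ₀ h τ`; its mean, second moment, energy and
level-one weight are expressed through `g` and `h`. -/

lemma cubeMean_split (g h : (Fin n → Bool) → ℝ) (f : (Fin (n + 1) → Bool) → ℝ)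
    (ht : ∀ τ, f (Fin.cons true τ) = g τ + h τ) (hf : ∀ τ, f (Fin.cons false τ) = g τ - h τ) :
    cubeMean f = cubeMean g := by
  rw [cubeMean_succ]
  simp only [ht, hf, cubeMean_add, cubeMean_sub]
  ring

lemma cubeMean_sq_split (g h : (Fin n → Bool) → ℝ) (f : (Fin (n + 1) → Bool) → ℝ)
    (ht : ∀ τ, f (Fin.cons true τ) = g τ + h τ) (hf : ∀ τ, f (Fin.cons false τ) = g τ - h τ) :
    cubeMean (fun σ => f σ ^ 2) = cubeMean (fun τ => g τ ^ 2) + cubeMean (fun τ => h τ ^ 2) := by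
  rw [← cubeMean_add, cubeMean_split (fun τ => g τ ^ 2 + h τ ^ 2) (fun τ => 2 * g τ * h τ)]
  · intro τ; simp only [ht]; ring
  · intro τ; simp only [hf]; ring

lemma cubeEnergy_split (g h : (Fin n → Bool) → ℝ) (f : (Fin (n + 1) → Bool) → ℝ)
    (ht : ∀ τ, f (Fin.cons true τ) = g τ + h τ) (hf : ∀ τ, f (Fin.cons false τ) = g τ - h τ) :
    cubeEnergy f = cubeEnergy g + cubeEnergy h + cubeMean (fun τ => h τ ^ 2) := by
  have h0 : cubeMean (fun σ => (f σ - f (flipAt 0 σ)) ^ 2) = 4 * cubeMean (fun τ => h τ ^ 2) := by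
    rw [← cubeMean_const_mul, cubeMean_split (fun τ => 4 * h τ ^ 2) (fun _ => 0)] <;>
    · intro τ
      simp only [flipAt_zero_cons, ht, hf, Bool.not_true, Bool.not_false]
      ring
  have h1 : ∀ i : Fin n, cubeMean (fun σ => (f σ - f (flipAt i.succ σ)) ^ 2) =
      cubeMean (fun τ => (g τ - g (flipAt i τ)) ^ 2) +
        cubeMean (fun τ => (h τ - h (flipAt i τ)) ^ 2) := by
    intro i
    apply cubeMean_sq_split (fun τ => g τ - g (flipAt i τ)) (fun τ => h τ - h (flipAt i τ))
      (fun σ => f σ - f (flipAt i.succ σ)) <;>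
    · intro τ
      simp only [flipAt_succ_cons, ht, hf]
      ring
  unfold cubeEnergy
  rw [Fin.sum_univ_succ, h0]
  simp only [h1, Finset.sum_add_distrib]
  ring

lemma levelOne_split (g h : (Fin n → Bool) → ℝ) (f : (Fin (n + 1) → Bool) → ℝ)
    (ht : ∀ τ, f (Fin.cons true τ) = g τ + h τ) (hf : ∀ τ, f (Fin.cons false τ) = g τ - h τ) :
    levelOne f = levelOne g + cubeMean h ^ 2 := by
  have h0 : cubeMean (fun σ => signVec σ 0 * f σ) = cubeMean h := by
    apply cubeMean_split h g
    · intro τ; simp only [signVec_zero_cons, ht, if_true]; ring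
    · intro τ; simp only [signVec_zero_cons, hf, Bool.false_eq_true, if_false]; ring
  have h1 : ∀ i : Fin n, cubeMean (fun σ => signVec σ i.succ * f σ) =
      cubeMean (fun τ => signVec τ i * g τ) := by
    intro i
    apply cubeMean_split _ (fun τ => signVec τ i * h τ) <;>
    · intro τ
      simp only [signVec_succ_cons, ht, hf]
      ring
  unfold levelOne
  rw [Fin.sum_univ_succ, h0]
  simp only [h1]
  ring

lemma exists_split (f : (Fin (n + 1) → Bool) → ℝ) : ∃ g h : (Fin n → Bool) → ℝ,
    (∀ τ, f (Fin.cons true τ) = g τ + h τ) ∧ ∀ τ, f (Fin.cons false τ) = g τ - h τ :=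
  ⟨fun τ => (f (Fin.cons true τ) + f (Fin.cons false τ)) / 2,
    fun τ => (f (Fin.cons true τ) - f (Fin.cons false τ)) / 2,
    fun τ => by ring, fun τ => by ring⟩

lemma cubeEnergy_nonneg (f : (Fin n → Bool) → ℝ) : 0 ≤ cubeEnergy f :=
  div_nonneg (Finset.sum_nonneg fun _ _ => cubeMean_nonneg fun _ => sq_nonneg _) (by norm_num)

lemma cubeMean_zero_dim (f : (Fin 0 → Bool) → ℝ) : cubeMean f = f default := by
  simp only [cubeMean, pow_zero, div_one]
  exact (Fintype.sum_unique f).trans (congrArg f (Subsingleton.elim _ _))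

/-- The Poincaré inequality on the cube. -/
lemma cube_poincare (f : (Fin n → Bool) → ℝ) :
    cubeMean (fun σ => f σ ^ 2) - cubeMean f ^ 2 ≤ cubeEnergy f := by
  induction n with
  | zero => simp [cubeMean_zero_dim, cubeEnergy]
  | succ n ih =>
    obtain ⟨g, h, ht, hf⟩ := exists_split f
    rw [cubeMean_sq_split g h f ht hf, cubeMean_split g h f ht hf, cubeEnergy_split g h f ht hf]
    linarith [ih g, cubeEnergy_nonneg h]

/-- In Fourier terms, level `k` contributes `k` times its weight to the energy, so only
level one prevents a spectral gap of `2`. -/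
lemma two_mul_variance_le_add_levelOne (f : (Fin n → Bool) → ℝ) :
    2 * (cubeMean (fun σ => f σ ^ 2) - cubeMean f ^ 2) ≤ cubeEnergy f + levelOne f := by
  induction n with
  | zero => simp [cubeMean_zero_dim, cubeEnergy, levelOne]
  | succ n ih =>
    obtain ⟨g, h, ht, hf⟩ := exists_split f
    rw [cubeMean_sq_split g h f ht hf, cubeMean_split g h f ht hf, cubeEnergy_split g h f ht hf,
      levelOne_split g h f ht hf]
    linarith [ih g, cube_poincare h]

lemma levelOne_eq_zero_of_even (f : (Fin n → Bool) → ℝ) (hf : ∀ σ, f (fun i => !σ i) = f σ) :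
    levelOne f = 0 := by
  refine Finset.sum_eq_zero fun i _ => ?_
  have h1 := cubeMean_compl (fun σ => signVec σ i * f σ)
  have h2 := cubeMean_const_mul (-1) (fun σ => signVec σ i * f σ)
  simp only [signVec_compl, hf, Pi.neg_apply, neg_mul, one_mul] at h1 h2
  have : cubeMean (fun σ => signVec σ i * f σ) = 0 := by linarith
  rw [this]
  norm_num

lemma two_mul_variance_le (f : (Fin n → Bool) → ℝ) (hf : ∀ σ, f (fun i => !σ i) = f σ) :
    2 * (cubeMean (fun σ => f σ ^ 2) - cubeMean f ^ 2) ≤ cubeEnergy f := by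
  simpa [levelOne_eq_zero_of_even f hf] using two_mul_variance_le_add_levelOne f

lemma sq_cubeMean_le (f : (Fin n → Bool) → ℝ) :
    cubeMean f ^ 2 ≤ cubeMean (fun σ => f σ ^ 2) := by
  have h : 0 ≤ cubeMean (fun σ => (f σ - cubeMean f) ^ 2) := cubeMean_nonneg fun _ => sq_nonneg _
  have e : (fun σ => (f σ - cubeMean f) ^ 2) =
      fun σ => f σ ^ 2 - 2 * cubeMean f * f σ + cubeMean f ^ 2 := by
    funext σ; ring
  rw [e, cubeMean_add, cubeMean_sub, cubeMean_const_mul, cubeMean_const] at h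
  linarith

/-- The sum of all neighbours of a point of the cube is `n - 2` times that point. -/
lemma sum_signVec_flipAt (σ : Fin n → Bool) :
    ∑ i, signVec (flipAt i σ) = ((n : ℝ) - 2) • signVec σ := by
  ext j
  have : ∀ i, signVec (flipAt i σ) j = signVec σ j - if j = i then 2 * signVec σ j else 0 := by
    intro i
    rw [signVec_flipAt]
    split_ifs <;> ring
  simp only [Finset.sum_apply, this, Finset.sum_sub_distrib, Finset.sum_const, Finset.card_univ,
    Fintype.card_fin, Finset.sum_ite_eq, Finset.mem_univ, if_true, Pi.smul_apply, smul_eq_mul,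
    nsmul_eq_mul]
  ring

end cube

/-! ### Quadratic forms -/

lemma posSemidef_quad_nonneg {ι : Type*} [Fintype ι] {A : Matrix ι ι ℝ} (hA : A.PosSemidef)
    (x : ι → ℝ) : 0 ≤ x ⬝ᵥ (A *ᵥ x) := by
  simpa using hA.dotProduct_mulVec_nonneg x

lemma posSemidef_quad_comm {ι : Type*} [Fintype ι] {A : Matrix ι ι ℝ} (hA : A.PosSemidef)
    (x y : ι → ℝ) : x ⬝ᵥ (A *ᵥ y) = y ⬝ᵥ (A *ᵥ x) := by
  have hT : Aᵀ = A := by simpa [Matrix.IsHermitian] using hA.isHermitian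
  rw [dotProduct_mulVec, ← mulVec_transpose, hT, dotProduct_comm]

/-- Cauchy–Schwarz for a positive semidefinite form. -/
lemma posSemidef_cauchy_schwarz {ι : Type*} [Fintype ι] {A : Matrix ι ι ℝ} (hA : A.PosSemidef)
    (x y : ι → ℝ) : (x ⬝ᵥ (A *ᵥ y)) ^ 2 ≤ (x ⬝ᵥ (A *ᵥ x)) * (y ⬝ᵥ (A *ᵥ y)) := by
  have h : ∀ t : ℝ, 0 ≤ (y ⬝ᵥ (A *ᵥ y)) * (t * t) + (2 * (x ⬝ᵥ (A *ᵥ y))) * t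
      + x ⬝ᵥ (A *ᵥ x) := by
    intro t
    have h0 := posSemidef_quad_nonneg hA (x + t • y)
    simp only [mulVec_add, mulVec_smul, add_dotProduct, dotProduct_add, smul_dotProduct,
      dotProduct_smul, smul_eq_mul, posSemidef_quad_comm hA y x] at h0
    linarith
  have := discrim_le_zero h
  unfold discrim at this
  linarith

/-- The dual norm of a positive definite form is the norm of the inverse form. -/
lemma sSup_abs_dotProduct_eq_sqrt {ι : Type*} [Fintype ι] [DecidableEq ι] {N : Matrix ι ι ℝ}
    (hN : N.PosDef) (w : ι → ℝ) :
    sSup ((fun p : ι → ℝ => |w ⬝ᵥ p|) '' {p | p ⬝ᵥ (N *ᵥ p) ≤ 1}) =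
      Real.sqrt (w ⬝ᵥ (N⁻¹ *ᵥ w)) := by
  have hdet : IsUnit N.det := (Matrix.isUnit_iff_isUnit_det N).mp hN.isUnit
  set q := N⁻¹ *ᵥ w with hq
  have hNq : N *ᵥ q = w := by
    rw [hq, mulVec_mulVec, Matrix.mul_nonsing_inv _ hdet, one_mulVec]
  set c := w ⬝ᵥ q with hc
  have hqq : q ⬝ᵥ (N *ᵥ q) = c := by rw [hNq, dotProduct_comm]
  have hc0 : 0 ≤ c := by rw [← hqq]; exact posSemidef_quad_nonneg hN.posSemidef q
  refine IsGreatest.csSup_eq ⟨?_, ?_⟩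
  · -- The maximum is attained at `q / √c`; for `c = 0` this is the zero vector.
    refine ⟨(Real.sqrt c)⁻¹ • q, ?_, ?_⟩
    · simp only [Set.mem_ofPred_eq, mulVec_smul, smul_dotProduct, dotProduct_smul, smul_eq_mul,
        hqq]
      rw [← mul_assoc, ← mul_inv, Real.mul_self_sqrt hc0]
      exact inv_mul_le_one
    · simp only [dotProduct_smul, smul_eq_mul]
      rw [← hc, inv_mul_eq_div, Real.div_sqrt, abs_of_nonneg (Real.sqrt_nonneg c)]
  · rintro _ ⟨p, hp, rfl⟩
    refine Real.abs_le_sqrt ?_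
    have h := posSemidef_cauchy_schwarz hN.posSemidef p q
    rw [hqq, hNq, dotProduct_comm p w] at h
    exact h.trans (mul_le_of_le_one_left hc0 hp)

/-! ### Second moment of a Rademacher quadratic form -/

lemma cubeMean_quad {n : ℕ} (A : Matrix (Fin n) (Fin n) ℝ) :
    cubeMean (fun σ => signVec σ ⬝ᵥ (A *ᵥ signVec σ)) = A.trace := by
  have : (fun σ : Fin n → Bool => signVec σ ⬝ᵥ (A *ᵥ signVec σ)) =
      fun σ => ∑ i, ∑ j, A i j * (signVec σ i * signVec σ j) := by
    funext σ
    simp only [dotProduct, mulVec, Finset.mul_sum]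
    exact Finset.sum_congr rfl fun i _ => Finset.sum_congr rfl fun j _ => by ring
  rw [this, cubeMean_sum]
  simp only [cubeMean_sum, cubeMean_const_mul, cubeMean_signVec_mul]
  simp [Matrix.trace]

/-- The energy of the seminorm `√(σᵀ A σ)` is at most its second moment. -/
lemma cubeEnergy_sqrt_quad_le {n : ℕ} {A : Matrix (Fin n) (Fin n) ℝ} (hA : A.PosSemidef)
    (f : (Fin n → Bool) → ℝ) (hf : ∀ σ, f σ = Real.sqrt (signVec σ ⬝ᵥ (A *ᵥ signVec σ))) :
    cubeEnergy f ≤ cubeMean (fun σ => f σ ^ 2) := by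
  have hsq : ∀ σ, f σ ^ 2 = signVec σ ⬝ᵥ (A *ᵥ signVec σ) := fun σ => by
    rw [hf, Real.sq_sqrt (posSemidef_quad_nonneg hA _)]
  have hnn : ∀ σ, 0 ≤ f σ := fun σ => by rw [hf]; exact Real.sqrt_nonneg _
  have hcs : ∀ σ i, signVec σ ⬝ᵥ (A *ᵥ signVec (flipAt i σ)) ≤ f σ * f (flipAt i σ) := by
    intro σ i
    refine abs_le_of_sq_le_sq' ?_ (mul_nonneg (hnn _) (hnn _)) |>.2
    rw [mul_pow, hsq, hsq]
    exact posSemidef_cauchy_schwarz hA _ _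
  have hnb : ∀ σ, ((n : ℝ) - 2) * f σ ^ 2 ≤ ∑ i, f σ * f (flipAt i σ) := by
    intro σ
    calc ((n : ℝ) - 2) * f σ ^ 2 = ∑ i, signVec σ ⬝ᵥ (A *ᵥ signVec (flipAt i σ)) := by
          rw [← dotProduct_sum, ← mulVec_sum, sum_signVec_flipAt, mulVec_smul, dotProduct_smul,
            hsq, smul_eq_mul]
      _ ≤ _ := Finset.sum_le_sum fun i _ => hcs σ i
  have hE : ∀ i : Fin n, cubeMean (fun σ => (f σ - f (flipAt i σ)) ^ 2) =
      2 * cubeMean (fun σ => f σ ^ 2) - 2 * cubeMean (fun σ => f σ * f (flipAt i σ)) := by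
    intro i
    have e : (fun σ => (f σ - f (flipAt i σ)) ^ 2) =
        fun σ => (f σ ^ 2 + f (flipAt i σ) ^ 2) - 2 * (f σ * f (flipAt i σ)) := by
      funext σ; ring
    rw [e, cubeMean_sub, cubeMean_add, cubeMean_flipAt i (fun σ => f σ ^ 2), cubeMean_const_mul]
    ring
  have hm := cubeMean_mono hnb
  rw [cubeMean_const_mul, cubeMean_sum] at hm
  unfold cubeEnergy
  simp only [hE, Finset.sum_sub_distrib, Finset.sum_const, Finset.card_univ, Fintype.card_fin,
    nsmul_eq_mul, ← Finset.mul_sum]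
  linarith

/-- The Khintchine–Kahane inequality between first and second moments, for the Hilbert seminorm
`√(xᵀ A x)`. -/
lemma khintchine_quadratic {n : ℕ} {A : Matrix (Fin n) (Fin n) ℝ} (hA : A.PosSemidef) :
    cubeMean (fun σ => Real.sqrt (signVec σ ⬝ᵥ (A *ᵥ signVec σ))) ^ 2 ≤ A.trace ∧
    A.trace ≤ 2 * cubeMean (fun σ => Real.sqrt (signVec σ ⬝ᵥ (A *ᵥ signVec σ))) ^ 2 := by
  have hsq : (fun σ : Fin n → Bool => Real.sqrt (signVec σ ⬝ᵥ (A *ᵥ signVec σ)) ^ 2) =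
      fun σ => signVec σ ⬝ᵥ (A *ᵥ signVec σ) := by
    funext σ
    exact Real.sq_sqrt (posSemidef_quad_nonneg hA _)
  set f : (Fin n → Bool) → ℝ := fun σ => Real.sqrt (signVec σ ⬝ᵥ (A *ᵥ signVec σ)) with hf
  have htr : cubeMean (fun σ => f σ ^ 2) = A.trace := by
    rw [← cubeMean_quad A]
    exact congrArg cubeMean hsq
  rw [← htr]
  refine ⟨sq_cubeMean_le f, ?_⟩
  have h1 := two_mul_variance_le f fun σ => by simp [hf, signVec_compl, mulVec_neg]
  have h2 := cubeEnergy_sqrt_quad_le hA f fun _ => rfl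
  linarith

/-! ### The block form of the constraint -/

section block

variable {l u m : ℕ}

/-- The matrix of the quadratic form
`(α₁, α₂) ↦ α₁ᵀ M₁ α₁ + α₂ᵀ M₂ α₂ + γ ‖K₁ α₁ - K₂ α₂‖²`, indexed by the disjoint union of
the index sets of `α₁` and `α₂`. -/
def constraintMatrix (M₁ M₂ : Matrix (Fin m) (Fin m) ℝ) (K₁ K₂ : Matrix (Fin u) (Fin m) ℝ)
    (γ : ℝ) : Matrix (Fin m ⊕ Fin m) (Fin m ⊕ Fin m) ℝ :=
  fromBlocks M₁ 0 0 M₂ + (γ • (fromCols K₁ (-K₂))ᵀ) * (1 : Matrix (Fin u) (Fin u) ℝ) *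
    fromCols K₁ (-K₂)

lemma constraintMatrix_quad (M₁ M₂ : Matrix (Fin m) (Fin m) ℝ) (K₁ K₂ : Matrix (Fin u) (Fin m) ℝ)
    (γ : ℝ) (p₁ p₂ : Fin m → ℝ) :
    Sum.elim p₁ p₂ ⬝ᵥ (constraintMatrix M₁ M₂ K₁ K₂ γ *ᵥ Sum.elim p₁ p₂) =
      p₁ ⬝ᵥ (M₁ *ᵥ p₁) + p₂ ⬝ᵥ (M₂ *ᵥ p₂) + γ * ∑ i, ((K₁ *ᵥ p₁) i - (K₂ *ᵥ p₂) i) ^ 2 := by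
  have hB : fromCols K₁ (-K₂) *ᵥ Sum.elim p₁ p₂ = K₁ *ᵥ p₁ - K₂ *ᵥ p₂ := by
    rw [fromCols_mulVec_sumElim, neg_mulVec, sub_eq_add_neg]
  unfold constraintMatrix
  rw [add_mulVec, dotProduct_add, Matrix.mul_one, ← mulVec_mulVec, hB, smul_mulVec,
    dotProduct_smul, dotProduct_mulVec _ (fromCols K₁ (-K₂))ᵀ, vecMul_transpose, hB,
    fromBlocks_mulVec]
  simp only [Sum.elim_comp_inl, Sum.elim_comp_inr, zero_mulVec, add_zero, zero_add,
    sumElim_dotProduct_sumElim, smul_eq_mul]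
  simp [dotProduct, pow_two]

lemma constraintMatrix_posDef {M₁ M₂ : Matrix (Fin m) (Fin m) ℝ} (hM₁ : M₁.PosDef)
    (hM₂ : M₂.PosDef) (K₁ K₂ : Matrix (Fin u) (Fin m) ℝ) {γ : ℝ} (hγ : 0 ≤ γ) :
    (constraintMatrix M₁ M₂ K₁ K₂ γ).PosDef := by
  have hT₁ : M₁ᵀ = M₁ := by simpa [Matrix.IsHermitian] using hM₁.isHermitian
  have hT₂ : M₂ᵀ = M₂ := by simpa [Matrix.IsHermitian] using hM₂.isHermitian
  refine Matrix.PosDef.of_dotProduct_mulVec_pos ?_ ?_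
  · rw [Matrix.IsHermitian, conjTranspose_eq_transpose_of_trivial, constraintMatrix,
      transpose_add, fromBlocks_transpose, hT₁, hT₂]
    simp only [Matrix.mul_one, transpose_zero, Matrix.smul_mul, transpose_smul, transpose_mul,
      transpose_transpose]
  · intro x hx
    obtain ⟨p₁, p₂, rfl⟩ : ∃ p₁ p₂, x = Sum.elim p₁ p₂ :=
      ⟨x ∘ Sum.inl, x ∘ Sum.inr, (Sum.elim_comp_inl_inr x).symm⟩
    rw [star_trivial, constraintMatrix_quad]
    have h3 : 0 ≤ γ * ∑ i, ((K₁ *ᵥ p₁) i - (K₂ *ᵥ p₂) i) ^ 2 :=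
      mul_nonneg hγ (Finset.sum_nonneg fun _ _ => sq_nonneg _)
    have h1 := posSemidef_quad_nonneg hM₁.posSemidef p₁
    have h2 := posSemidef_quad_nonneg hM₂.posSemidef p₂
    by_cases hp₁ : p₁ = 0
    · have hp₂ : p₂ ≠ 0 := by
        rintro rfl
        subst hp₁
        exact hx (by ext i; cases i <;> rfl)
      have := hM₂.dotProduct_mulVec_pos hp₂
      rw [star_trivial] at this
      linarith
    · have := hM₁.dotProduct_mulVec_pos hp₁
      rw [star_trivial] at this
      linarith

/-- The Woodbury identity applied to the inverse of the constraint matrix. -/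
lemma fromCols_mul_constraintMatrix_inv {M₁ M₂ : Matrix (Fin m) (Fin m) ℝ} (hM₁ : M₁.PosDef)
    (hM₂ : M₂.PosDef) (L₁ L₂ : Matrix (Fin l) (Fin m) ℝ) (K₁ K₂ : Matrix (Fin u) (Fin m) ℝ)
    {γ : ℝ} (hγ : 0 ≤ γ) :
    fromCols L₁ L₂ * (constraintMatrix M₁ M₂ K₁ K₂ γ)⁻¹ * (fromCols L₁ L₂)ᵀ =
      (L₁ * M₁⁻¹ * L₁ᵀ + L₂ * M₂⁻¹ * L₂ᵀ) -
      γ • ((K₁ * M₁⁻¹ * L₁ᵀ - K₂ * M₂⁻¹ * L₂ᵀ)ᵀ *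
        (1 + γ • (K₁ * M₁⁻¹ * K₁ᵀ + K₂ * M₂⁻¹ * K₂ᵀ))⁻¹ *
        (K₁ * M₁⁻¹ * L₁ᵀ - K₂ * M₂⁻¹ * L₂ᵀ)) := by
  have hi₁ : (M₁⁻¹)ᵀ = M₁⁻¹ := by simpa [Matrix.IsHermitian] using hM₁.inv.isHermitian
  have hi₂ : (M₂⁻¹)ᵀ = M₂⁻¹ := by simpa [Matrix.IsHermitian] using hM₂.inv.isHermitian
  have hΘ : (K₁ * M₁⁻¹ * K₁ᵀ + K₂ * M₂⁻¹ * K₂ᵀ).PosSemidef := by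
    have h1 := hM₁.inv.posSemidef.mul_mul_conjTranspose_same K₁
    have h2 := hM₂.inv.posSemidef.mul_mul_conjTranspose_same K₂
    simpa using h1.add h2
  have hunit : IsUnit (1 + γ • (K₁ * M₁⁻¹ * K₁ᵀ + K₂ * M₂⁻¹ * K₂ᵀ)) :=
    (Matrix.PosDef.one.add_posSemidef (hΘ.smul hγ)).isUnit
  have := hM₁.isUnit.invertible
  have := hM₂.isUnit.invertible
  have hDinv : (fromBlocks M₁ 0 0 M₂)⁻¹ = fromBlocks M₁⁻¹ 0 0 M₂⁻¹ := by
    apply Matrix.inv_eq_right_inv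
    simp [fromBlocks_multiply, fromBlocks_one]
  have hD : IsUnit (fromBlocks M₁ 0 0 M₂) := by
    rw [Matrix.isUnit_fromBlocks_zero₂₁]
    exact ⟨hM₁.isUnit, hM₂.isUnit⟩
  have hBB : fromCols K₁ (-K₂) * fromBlocks M₁⁻¹ 0 0 M₂⁻¹ * (fromCols K₁ (-K₂))ᵀ =
      K₁ * M₁⁻¹ * K₁ᵀ + K₂ * M₂⁻¹ * K₂ᵀ := by
    simp [fromCols_mul_fromBlocks, transpose_fromCols, fromCols_mul_fromRows]
  have hBL : fromCols K₁ (-K₂) * fromBlocks M₁⁻¹ 0 0 M₂⁻¹ * (fromCols L₁ L₂)ᵀ =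
      K₁ * M₁⁻¹ * L₁ᵀ - K₂ * M₂⁻¹ * L₂ᵀ := by
    simp [fromCols_mul_fromBlocks, transpose_fromCols, fromCols_mul_fromRows, sub_eq_add_neg]
  have hLB : fromCols L₁ L₂ * fromBlocks M₁⁻¹ 0 0 M₂⁻¹ * (fromCols K₁ (-K₂))ᵀ =
      (K₁ * M₁⁻¹ * L₁ᵀ - K₂ * M₂⁻¹ * L₂ᵀ)ᵀ := by
    rw [← hBL]
    simp [transpose_mul, fromBlocks_transpose, hi₁, hi₂, Matrix.mul_assoc]
  have hLL : fromCols L₁ L₂ * fromBlocks M₁⁻¹ 0 0 M₂⁻¹ * (fromCols L₁ L₂)ᵀ =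
      L₁ * M₁⁻¹ * L₁ᵀ + L₂ * M₂⁻¹ * L₂ᵀ := by
    simp [fromCols_mul_fromBlocks, transpose_fromCols, fromCols_mul_fromRows]
  have hin : (1 : Matrix (Fin u) (Fin u) ℝ)⁻¹ + fromCols K₁ (-K₂) * (fromBlocks M₁ 0 0 M₂)⁻¹ *
      (γ • (fromCols K₁ (-K₂))ᵀ) = 1 + γ • (K₁ * M₁⁻¹ * K₁ᵀ + K₂ * M₂⁻¹ * K₂ᵀ) := by
    rw [hDinv, Matrix.mul_smul, hBB, inv_one]
  unfold constraintMatrix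
  rw [Matrix.add_mul_mul_inv_eq_sub _ _ _ _ hD isUnit_one (by rw [hin]; exact hunit), hin, hDinv,
    Matrix.mul_sub, Matrix.sub_mul, hLL, ← hLB]
  congr 1
  rw [← hBL]
  simp only [Matrix.mul_smul, Matrix.smul_mul, Matrix.mul_assoc]

end block

theorem mvlapsvm_empirical_rademacher_complexity (l u : ℕ) (hl : 0 < l)
    (M₁ M₂ : Matrix (Fin (l + u)) (Fin (l + u)) ℝ) (hM₁ : M₁.PosDef) (hM₂ : M₂.PosDef)
    (K₁ₗ K₂ₗ : Matrix (Fin l) (Fin (l + u)) ℝ) (K₁ᵤ K₂ᵤ : Matrix (Fin u) (Fin (l + u)) ℝ)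
    (γ₃ : ℝ) (hγ₃ : 0 ≤ γ₃)
    (S : Matrix (Fin l) (Fin l) ℝ)
    (hS : S = K₁ₗ * M₁⁻¹ * K₁ₗᵀ + K₂ₗ * M₂⁻¹ * K₂ₗᵀ)
    (Θ : Matrix (Fin u) (Fin u) ℝ)
    (hΘ : Θ = K₁ᵤ * M₁⁻¹ * K₁ᵤᵀ + K₂ᵤ * M₂⁻¹ * K₂ᵤᵀ)
    (J : Matrix (Fin u) (Fin l) ℝ)
    (hJ : J = K₁ᵤ * M₁⁻¹ * K₁ₗᵀ - K₂ᵤ * M₂⁻¹ * K₂ₗᵀ)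
    (U : ℝ) (hU : 0 ≤ U)
    (hU2 : U ^ 2 = S.trace - γ₃ * (Jᵀ * (1 + γ₃ • Θ)⁻¹ * J).trace)
    (R : ℝ)
    (hR : R = (1 / (l : ℝ)) * (∑ σ : Fin l → Bool,
      sSup ((fun p : (Fin (l + u) → ℝ) × (Fin (l + u) → ℝ) =>
          |(fun i => if σ i then (1 : ℝ) else -1) ⬝ᵥ (K₁ₗ *ᵥ p.1 + K₂ₗ *ᵥ p.2)|) ''
        {p : (Fin (l + u) → ℝ) × (Fin (l + u) → ℝ) |
          p.1 ⬝ᵥ (M₁ *ᵥ p.1) + p.2 ⬝ᵥ (M₂ *ᵥ p.2) +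
            γ₃ * ∑ i, ((K₁ᵤ *ᵥ p.1) i - (K₂ᵤ *ᵥ p.2) i) ^ 2 ≤ 1})) / 2 ^ l) :
    U / (Real.sqrt 2 * l) ≤ R ∧ R ≤ U / l := by
  set N := constraintMatrix M₁ M₂ K₁ᵤ K₂ᵤ γ₃ with hN
  have hNpd : N.PosDef := constraintMatrix_posDef hM₁ hM₂ K₁ᵤ K₂ᵤ hγ₃
  set L := fromCols K₁ₗ K₂ₗ with hL
  set A := L * N⁻¹ * Lᵀ with hA
  have hApsd : A.PosSemidef := by
    simpa [hA] using hNpd.inv.posSemidef.mul_mul_conjTranspose_same L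
  have htr : A.trace = U ^ 2 := by
    rw [hU2, hA, hL, hN, fromCols_mul_constraintMatrix_inv hM₁ hM₂ K₁ₗ K₂ₗ K₁ᵤ K₂ᵤ hγ₃,
      trace_sub, trace_smul, ← hS, ← hJ, ← hΘ, smul_eq_mul]
  have hsup : ∀ σ : Fin l → Bool,
      sSup ((fun p : (Fin (l + u) → ℝ) × (Fin (l + u) → ℝ) =>
          |(fun i => if σ i then (1 : ℝ) else -1) ⬝ᵥ (K₁ₗ *ᵥ p.1 + K₂ₗ *ᵥ p.2)|) ''
        {p : (Fin (l + u) → ℝ) × (Fin (l + u) → ℝ) |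
          p.1 ⬝ᵥ (M₁ *ᵥ p.1) + p.2 ⬝ᵥ (M₂ *ᵥ p.2) +
            γ₃ * ∑ i, ((K₁ᵤ *ᵥ p.1) i - (K₂ᵤ *ᵥ p.2) i) ^ 2 ≤ 1}) =
      Real.sqrt (signVec σ ⬝ᵥ (A *ᵥ signVec σ)) := by
    intro σ
    have hval : (Lᵀ *ᵥ signVec σ) ⬝ᵥ (N⁻¹ *ᵥ (Lᵀ *ᵥ signVec σ)) =
        signVec σ ⬝ᵥ (A *ᵥ signVec σ) := by
      rw [hA, ← mulVec_mulVec, ← mulVec_mulVec, dotProduct_mulVec _ L, mulVec_transpose]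
    have hlin : ∀ p₁ p₂, (Lᵀ *ᵥ signVec σ) ⬝ᵥ Sum.elim p₁ p₂ =
        signVec σ ⬝ᵥ (K₁ₗ *ᵥ p₁ + K₂ₗ *ᵥ p₂) := by
      intro p₁ p₂
      rw [mulVec_transpose, ← dotProduct_mulVec, hL, fromCols_mulVec_sumElim]
    rw [← hval, ← sSup_abs_dotProduct_eq_sqrt hNpd]
    congr 1
    ext y
    constructor
    · rintro ⟨⟨p₁, p₂⟩, hp, rfl⟩
      refine ⟨Sum.elim p₁ p₂, ?_, congrArg abs (hlin p₁ p₂)⟩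
      rw [Set.mem_ofPred_eq, hN, constraintMatrix_quad]
      exact hp
    · rintro ⟨p, hp, rfl⟩
      obtain ⟨p₁, p₂, rfl⟩ : ∃ p₁ p₂, p = Sum.elim p₁ p₂ :=
        ⟨p ∘ Sum.inl, p ∘ Sum.inr, (Sum.elim_comp_inl_inr p).symm⟩
      rw [Set.mem_ofPred_eq, hN, constraintMatrix_quad] at hp
      exact ⟨(p₁, p₂), hp, congrArg abs (hlin p₁ p₂).symm⟩
  obtain ⟨hup, hlow⟩ := khintchine_quadratic hApsd
  set E := cubeMean (fun σ => Real.sqrt (signVec σ ⬝ᵥ (A *ᵥ signVec σ))) with hE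
  have hE0 : 0 ≤ E := cubeMean_nonneg fun _ => Real.sqrt_nonneg _
  have hRE : R = E / l := by
    rw [hR, hE, cubeMean]
    simp only [hsup]
    ring
  have hl' : (0 : ℝ) < l := by exact_mod_cast hl
  rw [htr] at hup hlow
  rw [hRE]
  constructor
  · rw [← div_div]
    gcongr
    rw [div_le_iff₀ (by positivity)]
    refine abs_le_of_sq_le_sq' ?_ (by positivity) |>.2
    rw [mul_pow, Real.sq_sqrt (by norm_num)]
    linarith
  · gcongr
    exact abs_le_of_sq_le_sq' hup hU |>.2
end
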